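/- The monoid M_1 is 2-aligned: for all p, q ∈ M_1, either pM_1 ∩ qM_1 = ∅ or there exist r_1, r_2 ∈ M_1 with pM_1 ∩ qM_1 = r_1M_1 ∪ r_2M_1. -/

import Mathlib

namespace Malcev

/-- The alphabet `X_n`: letters `a, b, c, d` together with `A_i, B_i, C_i, D_i`
for `i` ranging over `Fin n` (so `A ⟨0, _⟩` represents `A_1`, etc.). -/
inductive Letter (n : ℕ) : Type
  | a | b | c | d
  | A (i : Fin n) | B (i : Fin n) | C (i : Fin n) | D (i : Fin n)
  deriving DecidableEq

open FreeMonoid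

/-- The defining relations `ρ_n`. -/
inductive rel (n : ℕ) : FreeMonoid (Letter n) → FreeMonoid (Letter n) → Prop
  | da (h : 0 < n) :
      rel n (of .d * of .a) (of (.A ⟨0, h⟩) * of (.C ⟨0, h⟩))
  | AD (i : ℕ) (h : i + 1 < n) :
      rel n (of (.A ⟨i, Nat.lt_of_succ_lt h⟩) * of (.D ⟨i, Nat.lt_of_succ_lt h⟩))
            (of (.A ⟨i + 1, h⟩) * of (.C ⟨i + 1, h⟩))
  | An (h : 0 < n) :
      rel n (of (.A ⟨n - 1, Nat.sub_lt h Nat.one_pos⟩) * of (.D ⟨n - 1, Nat.sub_lt h Nat.one_pos⟩))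
            (of .d * of .b)
  | cb (h : 0 < n) :
      rel n (of .c * of .b)
            (of (.B ⟨n - 1, Nat.sub_lt h Nat.one_pos⟩) * of (.D ⟨n - 1, Nat.sub_lt h Nat.one_pos⟩))
  | BC (i : ℕ) (h : i + 1 < n) :
      rel n (of (.B ⟨i + 1, h⟩) * of (.C ⟨i + 1, h⟩))
            (of (.B ⟨i, Nat.lt_of_succ_lt h⟩) * of (.D ⟨i, Nat.lt_of_succ_lt h⟩))

/-- The congruence on the free monoid generated by `ρ_n`. -/
def Mcon (n : ℕ) : Con (FreeMonoid (Letter n)) := conGen (rel n)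

/-- The presented monoid `M_n = Mon⟨X_n | ρ_n⟩`. -/
abbrev Mn (n : ℕ) : Type := (Mcon n).Quotient

/-- The quotient (natural) map `X_n* → M_n`. -/
def mk (n : ℕ) : FreeMonoid (Letter n) →* Mn n := (Mcon n).mk'

/-- The image in `M_n` of a single letter. -/
def gen {n : ℕ} (x : Letter n) : Mn n := mk n (of x)

/-- The image in `M_n` of a word (given as a list of letters). -/
def word {n : ℕ} (w : List (Letter n)) : Mn n := mk n (ofList w)

/-- The set `P_n = {c, d, A_1, …, A_n, B_1, …, B_n}`. -/
def inP {n : ℕ} : Letter n → Prop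
  | .c => True | .d => True | .A _ => True | .B _ => True | _ => False

/-- The set `Q_n = {a, b, C_1, …, C_n, D_1, …, D_n}`. -/
def inQ {n : ℕ} : Letter n → Prop
  | .a => True | .b => True | .C _ => True | .D _ => True | _ => False

/-- `inR x y` means the two-letter word `xy` belongs to
`R_n = {db, A_1C_1, …, A_nC_n, B_1D_1, …, B_nD_n}`. -/
def inR {n : ℕ} : Letter n → Letter n → Prop
  | .d, .b => True
  | .A i, .C j => i = j
  | .B i, .D j => i = j
  | _, _ => False

/-- `inL x y` means the two-letter word `xy` belongs to
`L_n = {cb, da, A_1D_1, …, A_nD_n, B_2C_2, …, B_nC_n}`. -/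
def inL {n : ℕ} : Letter n → Letter n → Prop
  | .c, .b => True
  | .d, .a => True
  | .A i, .D j => i = j
  | .B i, .C j => i = j ∧ 1 ≤ i.val
  | _, _ => False

/-- A word is in left normal form if no two consecutive letters form a word in `R_n`. -/
def LeftNormal {n : ℕ} (w : List (Letter n)) : Prop :=
  List.Chain' (fun x y => ¬ inR x y) w

/-- `v ∈ M_n` is an intersection base if some word `a_1 ⋯ a_m` (`m ≥ 2`) in left
normal form equals `v` in `M_n` and its final two letters form a word in `L_n`. -/
def IsIntersectionBase {n : ℕ} (v : Mn n) : Prop :=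
  ∃ (w : List (Letter n)) (x y : Letter n),
    LeftNormal (w ++ [x, y]) ∧ word (w ++ [x, y]) = v ∧ inL x y

/-- The principal right ideal `pM_n`. -/
def rIdeal {n : ℕ} (p : Mn n) : Set (Mn n) := {x | ∃ m, x = p * m}

/-- `Swap x y x' y'` means that `xy = x'y'` is a defining relation of `M_1`, read in either
direction. -/
inductive Swap : Letter 1 → Letter 1 → Letter 1 → Letter 1 → Prop
  | da : Swap .d .a (.A 0) (.C 0)
  | AC : Swap (.A 0) (.C 0) .d .a
  | AD : Swap (.A 0) (.D 0) .d .b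
  | db : Swap .d .b (.A 0) (.D 0)
  | cb : Swap .c .b (.B 0) (.D 0)
  | BD : Swap (.B 0) (.D 0) .c .b

theorem Swap.symm {x y x' y' : Letter 1} (h : Swap x y x' y') : Swap x' y' x y := by
  cases h <;> constructor

/-- The second letter of a relator never is the first letter of a relator. -/
theorem Swap.not_overlap {x y x' y' z z' w' : Letter 1} (h : Swap x y x' y') :
    ¬ Swap y z z' w' := by
  intro h'
  cases h <;> cases h'

theorem Swap.eq_of_swap {x y x' y' x'' y'' : Letter 1} (h : Swap x y x' y')
    (h' : Swap x' y' x'' y'') : x'' = x ∧ y'' = y := by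
  cases h <;> cases h' <;> exact ⟨rfl, rfl⟩

/-- Two words are related when one arises from the other by applying defining relations of `M_1`
at pairwise disjoint places. -/
inductive SwapEq : List (Letter 1) → List (Letter 1) → Prop
  | nil : SwapEq [] []
  | cons (x : Letter 1) {u v : List (Letter 1)} : SwapEq u v → SwapEq (x :: u) (x :: v)
  | swap {x y x' y' : Letter 1} {u v : List (Letter 1)} :
      Swap x y x' y' → SwapEq u v → SwapEq (x :: y :: u) (x' :: y' :: v)

namespace SwapEq

theorem refl (u : List (Letter 1)) : SwapEq u u := by
  induction u with
  | nil => exact nil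
  | cons x u ih => exact cons x ih

theorem symm {u v : List (Letter 1)} (h : SwapEq u v) : SwapEq v u := by
  induction h with
  | nil => exact nil
  | cons x _ ih => exact cons x ih
  | swap hs _ ih => exact swap hs.symm ih

theorem append {u v u' v' : List (Letter 1)} (h : SwapEq u v) (h' : SwapEq u' v') :
    SwapEq (u ++ u') (v ++ v') := by
  induction h with
  | nil => exact h'
  | cons x _ ih => exact cons x ih
  | swap hs _ ih => exact swap hs ih

/-- A letter that ends a relator cannot be changed at the front of a word. -/
theorem of_cons_right {x y x' y' : Letter 1} (hs : Swap x y x' y') {u w : List (Letter 1)}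
    (h : SwapEq (y :: u) w) : ∃ w', w = y :: w' ∧ SwapEq u w' := by
  cases h with
  | cons _ h => exact ⟨_, rfl, h⟩
  | swap hs' _ => exact (hs.not_overlap hs').elim

theorem trans {u v w : List (Letter 1)} (h : SwapEq u v) (h' : SwapEq v w) : SwapEq u w := by
  induction h generalizing w with
  | nil => exact h'
  | cons x h ih =>
    cases h' with
    | cons _ h' => exact cons x (ih h')
    | swap hs h' =>
      obtain ⟨u', rfl, -⟩ := of_cons_right hs h.symm
      obtain ⟨w', hw, h''⟩ := of_cons_right hs (ih (cons _ h'))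
      cases hw
      exact swap hs h''
  | swap hs h ih =>
    cases h' with
    | cons _ h' =>
      obtain ⟨w', rfl, h''⟩ := of_cons_right hs.symm h'
      exact swap hs (ih h'')
    | swap hs' h' =>
      obtain ⟨rfl, rfl⟩ := hs.eq_of_swap hs'
      have huv := ih h'
      exact cons _ (cons _ huv)

/-- The last letter of a word is determined up to `SwapEq` if it may start a relator. -/
theorem exists_append_singleton {w w' : List (Letter 1)} (h : SwapEq w w')
    {x y x' y' : Letter 1} (hs : Swap x y x' y') {u : List (Letter 1)} (hw : w = u ++ [x]) :
    ∃ u', w' = u' ++ [x] := by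
  induction h generalizing u with
  | nil => simp at hw
  | @cons z u₁ v₁ h ih =>
    rcases u with _ | ⟨t, u⟩
    · obtain ⟨rfl, rfl⟩ : z = x ∧ u₁ = [] := by simpa using hw
      cases h
      exact ⟨[], rfl⟩
    · obtain ⟨u', rfl⟩ := ih (List.cons.inj hw).2
      exact ⟨z :: u', rfl⟩
  | @swap z t z' t' u₁ v₁ hs' h ih =>
    rcases u with _ | ⟨s, _ | ⟨s', u⟩⟩
    · simp at hw
    · obtain ⟨-, rfl, -⟩ : z = s ∧ t = x ∧ u₁ = [] := by simpa using hw
      exact (hs'.not_overlap hs).elim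
    · obtain ⟨u', rfl⟩ := ih (List.cons.inj (List.cons.inj hw).2).2
      exact ⟨z' :: t' :: u', rfl⟩

theorem last_eq {u u' : List (Letter 1)} {x y z t x' : Letter 1}
    (h : SwapEq (u ++ [x]) (u' ++ [x'])) (hs : Swap x y z t) : x' = x := by
  obtain ⟨v, hv⟩ := h.exists_append_singleton hs rfl
  simpa using (List.append_inj' hv rfl).2

/-- If `pm = qn` with `p` no longer than `q`, then either `p` is a left divisor of `q`, or `p` and
`q` differ only in their last letters, which are the first letters of the two sides of a defining
relation that straddles the factorizations. -/
theorem divides_or_swap {w w' : List (Letter 1)} (h : SwapEq w w') {p m q n : List (Letter 1)}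
    (hw : w = p ++ m) (hw' : w' = q ++ n) (hl : p.length ≤ q.length) :
    (∃ s, SwapEq (p ++ s) q) ∨ ∃ u x y x' y' m', Swap x y x' y' ∧ SwapEq p (u ++ [x]) ∧
      SwapEq q (u ++ [x']) ∧ m = y :: m' := by
  induction h generalizing p q with
  | nil =>
    obtain ⟨rfl, -⟩ : p = [] ∧ m = [] := by simpa using hw
    exact .inl ⟨q, refl q⟩
  | @cons z u₁ v₁ h ih =>
    rcases p with _ | ⟨s, p⟩
    · exact .inl ⟨q, refl q⟩
    rcases q with _ | ⟨s', q⟩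
    · simp at hl
    obtain ⟨rfl, hu⟩ := List.cons.inj hw
    obtain ⟨rfl, hu'⟩ := List.cons.inj hw'
    rcases ih hu hu' (by simpa using hl) with ⟨s, hs⟩ | ⟨u, x, y, x', y', m', hs, hp, hq, hm⟩
    · exact .inl ⟨s, cons _ hs⟩
    · exact .inr ⟨z :: u, x, y, x', y', m', hs, cons z hp, cons z hq, hm⟩
  | @swap z t z' t' u₁ v₁ hs' h ih =>
    rcases p with _ | ⟨s, p⟩
    · exact .inl ⟨q, refl q⟩
    rcases q with _ | ⟨s', q⟩
    · simp at hl
    obtain ⟨rfl, hu⟩ := List.cons.inj hw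
    obtain ⟨rfl, hu'⟩ := List.cons.inj hw'
    rcases p with _ | ⟨s, p⟩
    · rcases q with _ | ⟨s', q⟩
      · exact .inr ⟨[], z, t, z', t', u₁, hs', refl _, refl _, hu.symm⟩
      · obtain ⟨rfl, -⟩ := List.cons.inj hu'
        exact .inl ⟨t :: q, swap hs' (refl q)⟩
    rcases q with _ | ⟨s', q⟩
    · simp at hl
    obtain ⟨rfl, hv⟩ := List.cons.inj hu
    obtain ⟨rfl, hv'⟩ := List.cons.inj hu'
    rcases ih hv hv' (by simpa using hl) with ⟨s, hs⟩ | ⟨u, x, y, x', y', m', hs, hp, hq, hm⟩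
    · exact .inl ⟨s, swap hs' hs⟩
    · exact .inr ⟨z :: t :: u, x, y, x', y', m', hs, cons z (cons t hp),
        swap hs'.symm hq, hm⟩

end SwapEq

/-- `SwapEq` as a congruence on the free monoid. -/
def swapCon : Con (FreeMonoid (Letter 1)) where
  r u v := SwapEq u.toList v.toList
  iseqv := ⟨fun _ => SwapEq.refl _, SwapEq.symm, SwapEq.trans⟩
  mul' h h' := h.append h'

theorem word_append (u v : List (Letter 1)) : word (u ++ v) = word u * word v :=
  map_mul (mk 1) (ofList u) (ofList v)

theorem word_surjective (p : Mn 1) : ∃ u, word u = p :=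
  Con.mk'_surjective p

theorem Swap.word_eq {x y x' y' : Letter 1} (h : Swap x y x' y') :
    word [x, y] = word [x', y'] := by
  have of_rel {u v : FreeMonoid (Letter 1)} (h : rel 1 u v) : mk 1 u = mk 1 v :=
    (Con.eq _).2 (ConGen.Rel.of _ _ h)
  cases h
  · exact of_rel (.da Nat.one_pos)
  · exact (of_rel (.da Nat.one_pos)).symm
  · exact of_rel (.An Nat.one_pos)
  · exact (of_rel (.An Nat.one_pos)).symm
  · exact of_rel (.cb Nat.one_pos)
  · exact (of_rel (.cb Nat.one_pos)).symm

theorem word_eq_iff {u v : List (Letter 1)} : word u = word v ↔ SwapEq u v := by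
  constructor
  · intro h
    have hle : Mcon 1 ≤ swapCon := by
      refine Con.conGen_le.2 fun u v h => ?_
      cases h with
      | da _ => exact .swap .da .nil
      | AD i h => omega
      | An _ => exact .swap .AD .nil
      | cb _ => exact .swap .cb .nil
      | BC i h => omega
    exact hle ((Con.eq _).1 h)
  · intro h
    induction h with
    | nil => rfl
    | @cons x u v _ ih =>
      rw [← List.singleton_append, word_append, ih, ← word_append, List.singleton_append]
    | @swap x y x' y' u v hs _ ih =>
      have hu : word (x :: y :: u) = word [x, y] * word u := word_append [x, y] u
      have hv : word (x' :: y' :: v) = word [x', y'] * word v := word_append [x', y'] v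
      rw [hu, hv, ih, hs.word_eq]

theorem rIdeal_mul_subset (p m : Mn 1) : rIdeal (p * m) ⊆ rIdeal p := by
  rintro _ ⟨k, rfl⟩
  exact ⟨m * k, mul_assoc p m k⟩

/-- The letters `y` for which `xy = x'y'` may be a defining relation number at most two. -/
theorem Swap.exists_pair {x y x' y' : Letter 1} (h : Swap x y x' y') :
    ∃ y₁ z₁ y₂ z₂, Swap x y₁ x' z₁ ∧ Swap x y₂ x' z₂ ∧
      ∀ y z, Swap x y x' z → y = y₁ ∨ y = y₂ := by
  cases h
  · exact ⟨_, _, _, _, .da, .db, by rintro _ _ (_ | _) <;> simp⟩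
  · exact ⟨_, _, _, _, .AC, .AD, by rintro _ _ (_ | _) <;> simp⟩
  · exact ⟨_, _, _, _, .AC, .AD, by rintro _ _ (_ | _) <;> simp⟩
  · exact ⟨_, _, _, _, .da, .db, by rintro _ _ (_ | _) <;> simp⟩
  · exact ⟨_, _, _, _, .cb, .cb, by rintro _ _ ⟨⟩; simp⟩
  · exact ⟨_, _, _, _, .BD, .BD, by rintro _ _ ⟨⟩; simp⟩

theorem aligned_of_length_le {p q : List (Letter 1)} (hl : p.length ≤ q.length) :
    rIdeal (word p) ∩ rIdeal (word q) = ∅ ∨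
    ∃ r₁ r₂ : Mn 1, rIdeal (word p) ∩ rIdeal (word q) = rIdeal r₁ ∪ rIdeal r₂ := by
  have key : ∀ z ∈ rIdeal (word p) ∩ rIdeal (word q), (∃ s, SwapEq (p ++ s) q) ∨
      ∃ u x y x' y' m', Swap x y x' y' ∧ SwapEq p (u ++ [x]) ∧ SwapEq q (u ++ [x']) ∧
        z = word p * word [y] * m' := by
    rintro z ⟨⟨m, rfl⟩, n, h⟩
    obtain ⟨m, rfl⟩ := word_surjective m
    obtain ⟨n, rfl⟩ := word_surjective n
    rw [← word_append, ← word_append, word_eq_iff] at h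
    rcases h.divides_or_swap rfl rfl hl with hd | ⟨u, x, y, x', y', m', hs, hp, hq, rfl⟩
    · exact .inl hd
    · refine .inr ⟨u, x, y, x', y', word m', hs, hp, hq, ?_⟩
      rw [mul_assoc, ← word_append [y], List.singleton_append]
  by_cases hd : ∃ s, SwapEq (p ++ s) q
  · obtain ⟨s, hs⟩ := hd
    refine .inr ⟨word q, word q, ?_⟩
    rw [Set.union_self, Set.inter_eq_right, ← word_eq_iff.2 hs, word_append]
    exact rIdeal_mul_subset _ _
  rcases Set.eq_empty_or_nonempty (rIdeal (word p) ∩ rIdeal (word q)) with he | ⟨z, hz⟩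
  · exact .inl he
  obtain ⟨u, x, y, x', y', -, hs, hp, hq, -⟩ := (key z hz).resolve_left hd
  obtain ⟨y₁, z₁, y₂, z₂, h₁, h₂, hy⟩ := hs.exists_pair
  have sub {y z : Letter 1} (h : Swap x y x' z) :
      rIdeal (word p * word [y]) ⊆ rIdeal (word p) ∩ rIdeal (word q) := by
    refine Set.subset_inter (rIdeal_mul_subset _ _) ?_
    have e : word p * word [y] = word q * word [z] := by
      rw [word_eq_iff.2 hp, word_eq_iff.2 hq, word_append, word_append, mul_assoc, mul_assoc,
        ← word_append [x], ← word_append [x']]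
      exact congrArg (word u * ·) h.word_eq
    rw [e]
    exact rIdeal_mul_subset _ _
  refine .inr ⟨word p * word [y₁], word p * word [y₂],
    Set.Subset.antisymm (fun z hz => ?_) (Set.union_subset (sub h₁) (sub h₂))⟩
  obtain ⟨v, t, y, t', y', m', ht, hp', hq', rfl⟩ := (key z hz).resolve_left hd
  obtain rfl := (hp.symm.trans hp').last_eq hs
  obtain rfl := (hq.symm.trans hq').last_eq hs.symm
  rcases hy y y' ht with rfl | rfl
  · exact .inl ⟨_, rfl⟩
  · exact .inr ⟨_, rfl⟩

/-- the monoid `M_1` is `2`-aligned. -/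
theorem M1_two_aligned (p q : Mn 1) :
    rIdeal p ∩ rIdeal q = ∅ ∨
    ∃ r₁ r₂ : Mn 1, rIdeal p ∩ rIdeal q = rIdeal r₁ ∪ rIdeal r₂ := by
  obtain ⟨p, rfl⟩ := word_surjective p
  obtain ⟨q, rfl⟩ := word_surjective q
  rcases le_total p.length q.length with hl | hl
  · exact aligned_of_length_le hl
  · rw [Set.inter_comm]
    exact aligned_of_length_le hl

end Malcev
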